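/- There is a constant C depending only on d such that for every integer n ≥ 1 and every set Θ of unit vectors in ℝ^d with pairwise distances ≥ 2^{−4−nγ}, one has sup over ξ ∈ ℝ^d∖{0} of Σ_{ν∈Θ} |φ₀(2^{nγ}·n^{−5}·⟨ν, ξ/|ξ|⟩)| ≤ C·2^{nγ(d−2)}·n^5. -/

import Mathlib

/-!
The estimate is a volume-packing bound. With `e = ξ/|ξ|`, only those `ν ∈ Θ` with
`|⟨ν, e⟩| ≤ t := 2^{-nγ} n^5` contribute, each at most `sup |φ₀|`. The balls of radius
`r = 2^{-5-nγ}` about these `ν` are pairwise disjoint, and since `r ≤ t` they all lie in the cone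
`|⟨x, e⟩| ≤ 4t|x|` intersected with the annulus `1 - r ≤ |x| < 1 + r`.

The measure of a truncated cone is homogeneous of degree `d` (`volume_coneBall`), so the annular
part has measure `((1+r)^d - (1-r)^d) V = O(r V)`, where `V` is the measure of the cone inside the
unit ball. In an orthonormal basis starting with `e` that set lies in a box with one side `8t` and
the others `2`, so `V = O(t)` (`volume_cone_unit_le`). Comparing volumes, the number of
contributing `ν` is `O(t r^{1-d})` (`card_mul_le`), which is `O(2^{nγ(d-2)} n^5)`. The cone, rather
than a slab, makes this uniform in `t`, including the range where `t` is large.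
-/

open MeasureTheory Filter Metric
open scoped ENNReal FourierTransform RealInnerProductSpace Topology

noncomputable section

/-- Euclidean space `ℝ^d`. -/
abbrev Eu (d : ℕ) : Type := EuclideanSpace ℝ (Fin d)

/-- The parameter `γ = 1/2`. -/
def gam : ℝ := 1/2

/-- `ℓ(n) = ⌊2 log₂ n⌋ + 2`. -/
def elln (n : ℕ) : ℤ := ⌊2 * Real.logb 2 n⌋ + 2

/-- `ℓ_ε(n) = ⌊2 ε⁻¹ log₂ n⌋ + 2`. -/
def ellEps (ε : ℝ) (n : ℕ) : ℤ := ⌊2 * ε⁻¹ * Real.logb 2 n⌋ + 2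

/-- `n(ε) = 10^10 d ε⁻¹ log₂(2 ε⁻¹)`. -/
def nEps (d : ℕ) (ε : ℝ) : ℝ := 10 ^ 10 * d * ε⁻¹ * Real.logb 2 (2 * ε⁻¹)

variable {d : ℕ}

/-- `∫₀¹ a(sx + (1-s)y) ds`. -/
def avg01 (a : Eu d → ℝ) (x y : Eu d) : ℝ := ∫ s in (0:ℝ)..1, a (s • x + (1 - s) • y)

/-- `∫ ϑ(s) a(sx + (1-s)y) ds`. -/
def avgTh (ϑ : ℝ → ℝ) (a : Eu d → ℝ) (x y : Eu d) : ℝ :=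
  ∫ s : ℝ, ϑ s * a (s • x + (1 - s) • y)

/-- The dyadic piece `K_j(x) = (φ(2^{-j}x) - φ(2^{-j+1}x)) K(x)`. -/
def Kdyad (K φ : Eu d → ℝ) (j : ℤ) (x : Eu d) : ℝ :=
  (φ ((2:ℝ) ^ (-j) • x) - φ ((2:ℝ) ^ (-j+1) • x)) * K x

/-- `Φ_m(x) = 2^{-md} Φ(2^{-m} x)`. -/
def PhiM (Φ : Eu d → ℝ) (m : ℤ) (x : Eu d) : ℝ :=
  (2:ℝ) ^ (-(m * (d:ℤ))) * Φ ((2:ℝ) ^ (-m) • x)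

/-- `K_j^n = K_j * Φ_{j - ℓ_ε(n)}`. -/
def Kjn (K φ Φ : Eu d → ℝ) (ε : ℝ) (n : ℕ) (j : ℤ) (x : Eu d) : ℝ :=
  ∫ y, Kdyad K φ j (x - y) * PhiM Φ (j - ellEps ε n) y

/-- The operator `T_j` with kernel `K_j(x-y) ∫₀¹ a(sx+(1-s)y) ds`. -/
def TopJ (K φ a : Eu d → ℝ) (j : ℤ) (g : Eu d → ℂ) (x : Eu d) : ℂ :=
  ∫ y, ((Kdyad K φ j (x - y) * avg01 a x y : ℝ) : ℂ) * g y

/-- The operator `T_j^n` with kernel `K_j^n(x-y) ∫ ϑ_n(s) a(sx+(1-s)y) ds`. -/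
def Tnop (K φ Φ a : Eu d → ℝ) (ε : ℝ) (ϑn : ℝ → ℝ) (n : ℕ) (j : ℤ) (g : Eu d → ℂ)
    (x : Eu d) : ℂ :=
  ∫ y, ((Kjn K φ Φ ε n j (x - y) * avgTh ϑn a x y : ℝ) : ℂ) * g y

/-- The operator `T_j^{n,ν}` with kernel `K_j^{n,ν}(x-y) ∫ ϑ_n(s) a(sx+(1-s)y) ds`,
where `K_j^{n,ν} = K_j^n ⋅ χ` (with `χ = χ_{n,ν}`). -/
def Tnnu (K φ Φ a : Eu d → ℝ) (χv : Eu d → ℝ) (ε : ℝ) (ϑn : ℝ → ℝ) (n : ℕ) (j : ℤ)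
    (g : Eu d → ℂ) (x : Eu d) : ℂ :=
  ∫ y, ((Kjn K φ Φ ε n j (x - y) * χv (x - y) * avgTh ϑn a x y : ℝ) : ℂ) * g y

/-- `𝒦_{j,y}^{n,ν}[g](x) = K_j^{n,ν}(x-y) ∫ ϑ_n(s) g(sx+(1-s)y) ds` (with `χv = χ_{n,ν}`). -/
def Kcal (K φ Φ : Eu d → ℝ) (χv : Eu d → ℝ) (ε : ℝ) (ϑn : ℝ → ℝ) (n : ℕ) (j : ℤ)
    (y : Eu d) (g : Eu d → ℂ) (x : Eu d) : ℂ :=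
  ((Kjn K φ Φ ε n j (x - y) * χv (x - y) : ℝ) : ℂ) *
    ∫ s : ℝ, (ϑn s : ℂ) * g (s • x + (1 - s) • y)

/-- `P_m`, convolution with `Φ_m`. -/
def Pop (Φ : Eu d → ℝ) (m : ℤ) (g : Eu d → ℂ) (x : Eu d) : ℂ :=
  ∫ y, ((PhiM Φ m (x - y) : ℝ) : ℂ) * g y

/-- The (closed) cube with center `c` and sidelength `2^l`. -/
def cube (c : Eu d) (l : ℤ) : Set (Eu d) := {y | ∀ k, |y k - c k| ≤ (2:ℝ) ^ (l - 1)}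

/-- `B_m = Σ_{Q : L(Q) = m} b_Q`. -/
def Bfun {ι : Type} (Lq : ι → ℤ) (b : ι → Eu d → ℂ) (m : ℤ) (x : Eu d) : ℂ :=
  ∑' i : {i : ι // Lq i = m}, b i x

/-- The Fourier multiplier operator with multiplier `β_k(ξ) m(ξ)`,
`β_k(ξ) = φ(2^k ξ) - φ(2^{k+1} ξ)`, realized as convolution with the Schwartz kernel
`𝓕⁻[β_k ⋅ m]`. -/
def LamM (φ : Eu d → ℝ) (mf : Eu d → ℝ) (k : ℤ) (g : Eu d → ℂ) (x : Eu d) : ℂ :=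
  ∫ y, 𝓕⁻ (fun ξ : Eu d =>
      (((φ ((2:ℝ) ^ k • ξ) - φ ((2:ℝ) ^ (k+1) • ξ)) * mf ξ : ℝ) : ℂ)) (x - y) * g y

/-- The Littlewood–Paley operator `Λ_k`, Fourier multiplier `β_k`. -/
def Lam (φ : Eu d → ℝ) (k : ℤ) (g : Eu d → ℂ) (x : Eu d) : ℂ :=
  LamM φ (fun _ => 1) k g x

/-- `V_k`, the Fourier multiplier operator with multiplier `φ(2^k ξ)`, realized as
convolution with `𝓕⁻[φ(2^k ⬝)]`. -/
def Vop (φ : Eu d → ℝ) (k : ℤ) (g : Eu d → ℂ) (x : Eu d) : ℂ :=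
  ∫ y, 𝓕⁻ (fun ξ : Eu d => ((φ ((2:ℝ) ^ k • ξ) : ℝ) : ℂ)) (x - y) * g y

/-- The multiplier `ξ ↦ φ₀(r ⟨ν, ξ/|ξ|⟩)`. -/
def mDir (φ₀ : ℝ → ℝ) (r : ℝ) (ν : Eu d) (ξ : Eu d) : ℝ := φ₀ (r * ⟪ν, ‖ξ‖⁻¹ • ξ⟫)

/-- The tube `τ_i^{n,ν}`. -/
def tubeT (ν : Eu d) (n : ℕ) (i : ℤ) : Set (Eu d) :=
  {x | |⟪x, ν⟫| ≤ (2:ℝ) ^ (i + 2) ∧ ‖x - ⟪x, ν⟫ • ν‖ ≤ (2:ℝ) ^ (((i:ℝ) + 2) - gam * n)}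

/-- `H_i^{n,ν} = 2^{-id} 1_{τ_i^{n,ν}}`. -/
def Hfn (ν : Eu d) (n : ℕ) (i : ℤ) (x : Eu d) : ℝ :=
  Set.indicator (tubeT ν n i) (fun _ => (2:ℝ) ^ (-(i * (d:ℤ)))) x

/-- Convolution of real functions. -/
def convR (f g : Eu d → ℝ) (x : Eu d) : ℝ := ∫ y, f (x - y) * g y

open scoped Pointwise

/-- The part of the double cone `|⟨x, e⟩| ≤ a |x|` about the hyperplane `e^⊥` inside the open ball
of radius `s`. -/
def coneBall (e : Eu d) (a s : ℝ) : Set (Eu d) := {x | |⟪x, e⟫| ≤ a * ‖x‖ ∧ ‖x‖ < s}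

theorem measurableSet_coneBall (e : Eu d) (a s : ℝ) : MeasurableSet (coneBall e a s) := by
  have h1 : IsClosed {x : Eu d | |⟪x, e⟫| ≤ a * ‖x‖} :=
    isClosed_le (by fun_prop) (by fun_prop)
  have h2 : IsOpen {x : Eu d | ‖x‖ < s} := isOpen_lt (by fun_prop) (by fun_prop)
  exact h1.measurableSet.inter h2.measurableSet

theorem volume_coneBall_ne_top (e : Eu d) (a s : ℝ) : volume (coneBall e a s) ≠ ⊤ := by
  refine ne_top_of_le_ne_top (measure_ball_lt_top (x := (0 : Eu d)) (r := s)).ne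
    (measure_mono fun x hx => ?_)
  simpa using hx.2

/-- Homogeneity of the measure of truncated cones under dilation. -/
theorem volume_coneBall (e : Eu d) (a s : ℝ) (hs : 0 < s) :
    volume.real (coneBall e a s) = s ^ d * volume.real (coneBall e a 1) := by
  have h : coneBall e a s = s • coneBall e a 1 := by
    ext x
    rw [Set.mem_smul_set_iff_inv_smul_mem₀ hs.ne']
    simp only [coneBall, Set.mem_ofPred_eq, inner_smul_left, norm_smul, abs_mul, norm_inv,
      Real.norm_eq_abs, abs_of_pos hs, abs_of_pos (inv_pos.2 hs), conj_trivial]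
    refine and_congr ?_ ?_
    · rw [mul_left_comm, mul_le_mul_iff_right₀ (inv_pos.2 hs)]
    · rw [inv_mul_lt_iff₀ hs, mul_one]
  rw [h, measureReal_def, Measure.addHaar_smul, ENNReal.toReal_mul, measureReal_def]
  simp [abs_of_pos hs, pow_nonneg hs.le]

/-- In an orthonormal basis starting with `e`, the cone inside the unit ball lies in a box with one
side of length `2a` and all others of length `2`. -/
theorem volume_cone_unit_le (k : ℕ) (e : Eu (k + 1)) (he : ‖e‖ = 1) (a : ℝ) (ha : 0 ≤ a) :
    volume.real (coneBall e a 1) ≤ 2 ^ (k + 1) * a := by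
  obtain ⟨b, hb⟩ : ∃ b : OrthonormalBasis (Fin (k + 1)) ℝ (Eu (k + 1)), b 0 = e := by
    have hv : Orthonormal ℝ (({0} : Set (Fin (k + 1))).domRestrict fun _ => e) := by
      constructor
      · intro i
        simpa using he
      · intro i j hij
        exact absurd (Subsingleton.elim i j) hij
    obtain ⟨b, hb⟩ := hv.exists_orthonormalBasis_extension_of_card_eq (by simp)
    exact ⟨b, hb 0 rfl⟩
  let c : Fin (k + 1) → ℝ := Fin.cons a fun _ => 1
  have hc : ∀ i, 0 ≤ c i := by
    intro i
    refine Fin.cases ?_ (fun j => ?_) i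
    · simpa [c] using ha
    · simp [c]
  have hmp : MeasurePreserving (fun x : Eu (k + 1) => WithLp.ofLp (b.repr x)) volume volume :=
    (PiLp.volume_preserving_ofLp (Fin (k + 1))).comp b.measurePreserving_repr
  have hsub : coneBall e a 1 ⊆
      (fun x : Eu (k + 1) => WithLp.ofLp (b.repr x)) ⁻¹' Set.Icc (-c) c := by
    rintro x ⟨hx1, hx2⟩
    have hcoord : ∀ i, |b.repr x i| ≤ c i := by
      intro i
      refine Fin.cases ?_ (fun j => ?_) i
      · rw [b.repr_apply_apply, hb, real_inner_comm]
        simp only [c, Fin.cons_zero]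
        nlinarith
      · simp only [c, Fin.cons_succ]
        have := PiLp.norm_apply_le (b.repr x) j.succ
        rw [b.repr.norm_map, Real.norm_eq_abs] at this
        linarith
    exact ⟨fun i => (abs_le.1 (hcoord i)).1, fun i => (abs_le.1 (hcoord i)).2⟩
  have hle : -c ≤ c := fun i => by
    have := hc i
    simp only [Pi.neg_apply]
    linarith
  have hvol : volume.real (Set.Icc (-c) c) = 2 ^ (k + 1) * a := by
    rw [measureReal_def, Real.volume_Icc_pi_toReal hle, Fin.prod_univ_succ]
    simp only [c, Pi.neg_apply, Fin.cons_zero, Fin.cons_succ, Finset.prod_const,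
      Finset.card_univ, Fintype.card_fin]
    norm_num
    ring
  rw [← hvol, measureReal_def, measureReal_def,
    ← hmp.measure_preimage measurableSet_Icc.nullMeasurableSet]
  refine ENNReal.toReal_mono ?_ (measure_mono hsub)
  rw [hmp.measure_preimage measurableSet_Icc.nullMeasurableSet]
  exact isCompact_Icc.measure_lt_top.ne

/-- Packing bound for `2r`-separated unit vectors within `t` of the hyperplane `e^⊥`. -/
theorem card_mul_le (k : ℕ) (e : Eu (k + 1)) (he : ‖e‖ = 1) (r t : ℝ) (hr : 0 < r)
    (hr2 : r ≤ 1 / 2) (hrt : r ≤ t) (S : Finset (Eu (k + 1))) (hS : ∀ ν ∈ S, ‖ν‖ = 1)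
    (hSt : ∀ ν ∈ S, |⟪ν, e⟫| ≤ t) (hsep : ∀ ν ∈ S, ∀ ν' ∈ S, ν ≠ ν' → 2 * r ≤ ‖ν - ν'‖) :
    (S.card : ℝ) * (r ^ k * volume.real (ball (0 : Eu (k + 1)) 1)) ≤
      (k + 1) * 2 ^ (2 * k + 4) * t := by
  set A := coneBall e (4 * t) (1 + r) \ coneBall e (4 * t) (1 - r) with hA
  have hballs : (⋃ ν ∈ S, ball ν r) ⊆ A := by
    refine Set.iUnion₂_subset fun ν hν x hx => ?_
    rw [mem_ball, dist_eq_norm] at hx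
    have h1 : ‖x‖ < 1 + r := by
      have := norm_le_norm_add_norm_sub' x ν
      linarith [hS ν hν]
    have h2 : 1 - r < ‖x‖ := by
      have := norm_le_norm_add_norm_sub' ν x
      rw [norm_sub_rev] at this
      linarith [hS ν hν]
    have h3 : |⟪x, e⟫| ≤ t + r := by
      have h4 : ⟪x, e⟫ = ⟪ν, e⟫ + ⟪x - ν, e⟫ := by
        rw [← inner_add_left, add_sub_cancel]
      have h5 := abs_real_inner_le_norm (x - ν) e
      rw [he, mul_one] at h5
      rw [h4]
      exact (abs_add_le _ _).trans (by linarith [hSt ν hν])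
    -- `|x| ≥ 1/2` on the balls, whence the opening `4t` of the cone.
    refine ⟨⟨h3.trans ?_, h1⟩, fun h => absurd h.2 (by linarith)⟩
    nlinarith
  have hdisj : (S : Set (Eu (k + 1))).PairwiseDisjoint fun ν => ball ν r := by
    intro ν hν ν' hν' hne
    refine ball_disjoint_ball ?_
    rw [dist_eq_norm]
    linarith [hsep ν hν ν' hν' hne]
  have hball : ∀ ν : Eu (k + 1), volume.real (ball ν r) =
      r ^ (k + 1) * volume.real (ball (0 : Eu (k + 1)) 1) := by
    intro ν
    rw [measureReal_def, Measure.addHaar_ball_of_pos _ _ hr, ENNReal.toReal_mul, measureReal_def]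
    simp [ENNReal.toReal_ofReal (pow_nonneg hr.le _)]
  have hAfin : volume A ≠ ⊤ :=
    ne_top_of_le_ne_top (volume_coneBall_ne_top e (4 * t) (1 + r)) (measure_mono Set.sdiff_subset)
  have hunion : volume.real (⋃ ν ∈ S, ball ν r) =
      S.card * (r ^ (k + 1) * volume.real (ball (0 : Eu (k + 1)) 1)) := by
    rw [measureReal_biUnion_finset hdisj (fun _ _ => measurableSet_ball)
      (fun _ _ => measure_ball_lt_top.ne)]
    simp [hball]
  have hAvol : volume.real A =
      ((1 + r) ^ (k + 1) - (1 - r) ^ (k + 1)) * volume.real (coneBall e (4 * t) 1) := by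
    rw [hA, measureReal_sdiff ?_ (measurableSet_coneBall _ _ _) (volume_coneBall_ne_top _ _ _),
      volume_coneBall e (4 * t) (1 + r) (by linarith),
      volume_coneBall e (4 * t) (1 - r) (by linarith), sub_mul]
    exact fun x hx => ⟨hx.1, by linarith [hx.2]⟩
  have hpow : (1 + r) ^ (k + 1) - (1 - r) ^ (k + 1) ≤ 2 * r * (k + 1) * 2 ^ k := by
    refine (le_abs_self _).trans ((abs_pow_sub_pow_le _ _ _).trans ?_)
    rw [abs_of_nonneg (by linarith : (0 : ℝ) ≤ 1 + r - (1 - r)),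
      abs_of_nonneg (by linarith : (0 : ℝ) ≤ 1 + r), abs_of_nonneg (by linarith : (0 : ℝ) ≤ 1 - r),
      max_eq_left (by linarith)]
    push_cast
    rw [show 1 + r - (1 - r) = 2 * r by ring]
    gcongr
    linarith
  have hV := volume_cone_unit_le k e he (4 * t) (by linarith)
  have hmain := measureReal_mono hballs hAfin
  rw [hunion, hAvol] at hmain
  have hfin : (S.card : ℝ) * (r ^ (k + 1) * volume.real (ball (0 : Eu (k + 1)) 1)) ≤
      (2 * r * (k + 1) * 2 ^ k) * (2 ^ (k + 1) * (4 * t)) :=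
    hmain.trans (mul_le_mul hpow hV measureReal_nonneg (by positivity))
  refine le_of_mul_le_mul_right ?_ hr
  calc _ = (S.card : ℝ) * (r ^ (k + 1) * volume.real (ball (0 : Eu (k + 1)) 1)) := by ring
    _ ≤ _ := hfin
    _ = _ := by ring

theorem stmt (d : ℕ) (hd : 2 ≤ d)
    (φ₀ : ℝ → ℝ) (hφ₀sm : ContDiff ℝ (⊤ : ℕ∞) φ₀)
    (hφ₀1 : ∀ u : ℝ, |u| < 1/2 → φ₀ u = 1)
    (hφ₀0 : ∀ u : ℝ, 1 ≤ |u| → φ₀ u = 0)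
    :
    ∃ C : ℝ, 0 < C ∧ ∀ n : ℕ, 1 ≤ n → ∀ Θ : Finset (Eu d),
      (∀ ν ∈ Θ, ‖ν‖ = 1) →
      (∀ ν ∈ Θ, ∀ ν' ∈ Θ, ν ≠ ν' → (2:ℝ)^(-4 - (n:ℝ)*gam) ≤ ‖ν - ν'‖) →
      ∀ ξ : Eu d, ξ ≠ 0 →
        (∑ ν ∈ Θ, |φ₀ ((2:ℝ)^((n:ℝ)*gam) * (n:ℝ)^(-5 : ℤ) * ⟪ν, ‖ξ‖⁻¹ • ξ⟫)|)
          ≤ C * (2:ℝ)^((n:ℝ)*gam*((d:ℝ)-2)) * (n:ℝ)^(5:ℕ) := by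
  obtain ⟨k, rfl⟩ : ∃ k, d = k + 1 + 1 := ⟨d - 2, by omega⟩
  obtain ⟨M, hM⟩ : ∃ M : ℝ, ∀ u, |φ₀ u| ≤ M := by
    obtain ⟨M, hM⟩ := (isCompact_Icc (a := (-1 : ℝ)) (b := 1)).exists_bound_of_continuousOn
      hφ₀sm.continuous.continuousOn
    refine ⟨max M 0, fun u => ?_⟩
    by_cases hu : 1 ≤ |u|
    · simp [hφ₀0 u hu]
    · exact (hM u (abs_le.1 (not_le.1 hu).le)).trans (le_max_left _ _)
  have hM0 : 0 ≤ M := (abs_nonneg _).trans (hM 0)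
  set ω := volume.real (ball (0 : Eu (k + 1 + 1)) 1) with hω
  have hω0 : 0 < ω :=
    ENNReal.toReal_pos (measure_ball_pos _ _ one_pos).ne' measure_ball_lt_top.ne
  set D : ℝ := ((k + 1 : ℕ) + 1) * 2 ^ (2 * (k + 1) + 4) * 32 ^ (k + 1) / ω with hD
  have hD0 : 0 < D := by positivity
  refine ⟨(M + 1) * D, by positivity, fun n hn Θ hΘ hsep ξ hξ => ?_⟩
  set q : ℝ := (2 : ℝ) ^ ((n : ℝ) * gam) with hq
  have hg : 0 ≤ (n : ℝ) * gam := mul_nonneg (Nat.cast_nonneg n) (by norm_num [gam])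
  have hq1 : 1 ≤ q := Real.one_le_rpow one_le_two hg
  have hq0 : 0 < q := by linarith
  have hqd : (2 : ℝ) ^ ((n : ℝ) * gam * (((k + 1 + 1 : ℕ) : ℝ) - 2)) = q ^ k := by
    rw [hq, ← Real.rpow_natCast, ← Real.rpow_mul zero_le_two]
    push_cast
    ring_nf
  have hsepq : (2 : ℝ) ^ (-4 - (n : ℝ) * gam) = 2 * (1 / (32 * q)) := by
    rw [Real.rpow_sub zero_lt_two, ← hq,
      show (2 : ℝ) ^ (-4 : ℝ) = 1 / 16 by rw [Real.rpow_neg zero_le_two]; norm_num]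
    field_simp
    norm_num
  have hn1 : (1 : ℝ) ≤ (n : ℝ) ^ 5 := one_le_pow₀ (by exact_mod_cast hn)
  have hn0 : (0 : ℝ) < (n : ℝ) ^ 5 := by linarith
  have hnz : (n : ℝ) ^ (-5 : ℤ) = ((n : ℝ) ^ 5)⁻¹ := by
    rw [zpow_neg]
    norm_cast
  set e := ‖ξ‖⁻¹ • ξ with he
  have he1 : ‖e‖ = 1 := by
    rw [he, norm_smul, norm_inv, norm_norm, inv_mul_cancel₀ (norm_ne_zero_iff.2 hξ)]
  set S := Θ.filter fun ν => |⟪ν, e⟫| ≤ (n : ℝ) ^ 5 / q with hSdef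
  have hcard := card_mul_le (k + 1) e he1 (1 / (32 * q)) ((n : ℝ) ^ 5 / q) (by positivity)
    (by rw [div_le_div_iff₀ (by positivity) two_pos]; linarith)
    (by rw [div_le_div_iff₀ (by positivity) hq0]; nlinarith) S
    (fun ν hν => hΘ ν (Finset.mem_filter.1 hν).1) (fun ν hν => (Finset.mem_filter.1 hν).2)
    (fun ν hν ν' hν' hne => by
      rw [← hsepq]
      exact hsep ν (Finset.mem_filter.1 hν).1 ν' (Finset.mem_filter.1 hν').1 hne)
  have hcard2 : (S.card : ℝ) ≤ D * q ^ k * (n : ℝ) ^ 5 := by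
    refine le_of_mul_le_mul_right (hcard.trans_eq ?_) (by positivity)
    rw [hD, ← hω, one_div, inv_pow, mul_pow, pow_succ q k]
    field_simp
  have hsum : ∑ ν ∈ Θ, |φ₀ (q * (n : ℝ) ^ (-5 : ℤ) * ⟪ν, e⟫)| =
      ∑ ν ∈ S, |φ₀ (q * (n : ℝ) ^ (-5 : ℤ) * ⟪ν, e⟫)| := by
    refine (Finset.sum_filter_of_ne fun ν _ hne => ?_).symm
    contrapose! hne
    rw [hφ₀0 _ ?_, abs_zero]
    rw [hnz, abs_mul, abs_of_pos (by positivity), ← div_eq_mul_inv]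
    rw [div_lt_iff₀ hq0] at hne
    rw [div_mul_eq_mul_div, le_div_iff₀ hn0]
    linarith
  rw [hsum, hqd]
  calc _ ≤ ∑ _ν ∈ S, M := Finset.sum_le_sum fun ν _ => hM _
    _ = S.card * M := by simp
    _ ≤ (D * q ^ k * (n : ℝ) ^ 5) * (M + 1) :=
        mul_le_mul hcard2 (by linarith) hM0 (by positivity)
    _ = _ := by ring
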